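/- Let n ≥ 2 and 1 ≤ k ≤ n be integers, let P be any probability measure on ℝ^n (with the Borel σ-algebra), and let x ∈ Σ_k be a k-sparse vector. Let d := ⌊2k·lg(ne)⌋, and let ε, δ ∈ (0,1) and m ≥ max{ (8d/ε)·lg(8e/ε), (4/ε)·lg(2/δ) }. Draw a_1, …, a_m independently from P. Then with P^m-outer measure at most δ, the following bad event occurs: there exists a k-sparse vector x̂ ∈ Σ_k such that (⟨a_i, x̂⟩ ≥ 0 if and only if ⟨a_i, x⟩ ≥ 0) for all i = 1, …, m, yet P{ a ∈ ℝ^n : (⟨a, x̂⟩ ≥ 0) does not hold if and only if (⟨a, x⟩ ≥ 0) holds } > ε. Equivalently, with probability at least 1 − δ, every k-sparse x̂ consistent with the sign measurements of x has generalization error J(H(x̂), H(x)) = P(H(x̂) Δ H(x)) at most ε. -/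

import Mathlib

open Real MeasureTheory

noncomputable section

/-- A vector `x : ℝ^n` is `k`-sparse if it has at most `k` nonzero components. -/
def sparse (n k : ℕ) (x : Fin n → ℝ) : Prop :=
  ∃ s : Finset (Fin n), s.card ≤ k ∧ ∀ i ∉ s, x i = 0

/-!
The bad event occurs exactly when, for some `k`-sparse `x̂`, the set `H(x̂) Δ H(x)` has
probability above `ε` but contains no sample point, so the claim is that a random sample is an
`ε`-net for these sets. Pair the sample with an independent second one: with probability at least
`1 / 2`, a set missed by the first half is hit at least `ε m / 2` times by the second half.
Exchanging corresponding points of the two halves at random produces this imbalance with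
probability at most `2 ^ (-ε m / 2)` for each trace of the class on the double sample. By the
Sauer–Shelah lemma, the number of traces is polynomial in `m` with exponent the VC dimension. For
sparse half-spaces the dimension is bounded by splitting the class into `n.choose k` classes of
half-spaces generated by `k`-dimensional subspaces, each of VC dimension at most `k` by Dudley's
theorem.
-/

section Traces

open Finset

open scoped Classical in
/-- The sets of indices `i` with `z i ∈ C`, as `C` runs over the class `𝒞`. The number of traces on
samples of a given size is the growth function of the class. -/
def traces {E ι : Type*} [Fintype ι] (𝒞 : Set (Set E)) (z : ι → E) : Finset (Finset ι) :=
  {S | ∃ C ∈ 𝒞, ∀ i, i ∈ S ↔ z i ∈ C}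

/-- The class `𝒞` shatters the finite set `F`: every subset of `F` is cut out of `F` by a member. -/
def IsShattered {E : Type*} (𝒞 : Set (Set E)) (F : Finset E) : Prop :=
  ∀ t ⊆ F, ∃ C ∈ 𝒞, ∀ x ∈ F, x ∈ t ↔ x ∈ C

/-- The Vapnik–Chervonenkis dimension of a class of sets is at most `d`. -/
def VCDimLE {E : Type*} (𝒞 : Set (Set E)) (d : ℕ) : Prop :=
  ∀ F : Finset E, IsShattered 𝒞 F → #F ≤ d

variable {E ι : Type*} [Fintype ι] {𝒞 𝒟 : Set (Set E)} {z : ι → E} {d d' : ℕ}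

theorem mem_traces {S : Finset ι} : S ∈ traces 𝒞 z ↔ ∃ C ∈ 𝒞, ∀ i, i ∈ S ↔ z i ∈ C := by
  simp [traces]

theorem traces_mono (h : 𝒞 ⊆ 𝒟) : traces 𝒞 z ⊆ traces 𝒟 z := fun S hS ↦ by
  obtain ⟨C, hC, hCS⟩ := mem_traces.1 hS
  exact mem_traces.2 ⟨C, h hC, hCS⟩

theorem traces_biUnion [DecidableEq ι] {κ : Type*} (I : Finset κ) (𝒜 : κ → Set (Set E)) :
    traces (⋃ s ∈ I, 𝒜 s) z = I.biUnion fun s ↦ traces (𝒜 s) z := by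
  ext S
  simp only [mem_traces, Set.mem_iUnion, mem_biUnion]
  tauto

theorem mem_traces_comp_perm {e : Equiv.Perm ι} {S : Finset ι} :
    S ∈ traces 𝒞 (z ∘ e) ↔ S.map e.toEmbedding ∈ traces 𝒞 z := by
  simp only [mem_traces, mem_map_equiv, Function.comp_apply]
  refine exists_congr fun D ↦ and_congr_right fun _ ↦ ⟨fun h j ↦ ?_, fun h i ↦ ?_⟩
  · simpa using h (e.symm j)
  · simpa using h (e i)

theorem VCDimLE.mono (h : VCDimLE 𝒞 d) (hd : d ≤ d') : VCDimLE 𝒞 d' :=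
  fun F hF ↦ (h F hF).trans hd

theorem IsShattered.two_pow_card_le {F : Finset E} (hF : IsShattered 𝒞 F) :
    2 ^ #F ≤ #(traces 𝒞 ((↑) : F → E)) := by
  have traces_eq_univ : traces 𝒞 ((↑) : F → E) = univ := by
    refine eq_univ_of_forall fun S ↦ mem_traces.2 ?_
    obtain ⟨C, hC, hCS⟩ := hF (S.map (.subtype (· ∈ F))) (map_subtype_subset S)
    exact ⟨C, hC, fun i ↦ by simpa using hCS i i.2⟩
  simp [traces_eq_univ]

theorem VCDimLE.vcDim_traces_le [DecidableEq ι] (h : VCDimLE 𝒞 d) (z : ι → E) :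
    (traces 𝒞 z).vcDim ≤ d := by
  classical
  refine Finset.sup_le fun S hS ↦ ?_
  have hS : (traces 𝒞 z).Shatters S := mem_shatterer.1 hS
  have z_injOn : Set.InjOn z S := by
    intro i hi j hj hij
    obtain ⟨u, hu, hSu⟩ := hS (singleton_subset_iff.2 hi)
    obtain ⟨C, -, hC⟩ := mem_traces.1 hu
    have hiu : i ∈ S ∩ u := hSu ▸ mem_singleton_self i
    have hju : j ∈ S ∩ u :=
      mem_inter.2 ⟨hj, (hC j).2 (hij ▸ (hC i).1 (mem_inter.1 hiu).2)⟩
    exact (mem_singleton.1 (hSu ▸ hju)).symm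
  rw [← card_image_of_injOn z_injOn]
  refine h _ fun t _ ↦ ?_
  obtain ⟨u, hu, hSu⟩ := hS (filter_subset (fun i ↦ z i ∈ t) S)
  obtain ⟨C, hC, hCu⟩ := mem_traces.1 hu
  refine ⟨C, hC, forall_mem_image.2 fun i hi ↦ ?_⟩
  simpa [hi, ← hCu] using (Finset.ext_iff.1 hSu i).symm

theorem VCDimLE.card_traces_le (h : VCDimLE 𝒞 d) (z : ι → E) :
    #(traces 𝒞 z) ≤ ∑ i ∈ Iic d, (Fintype.card ι).choose i := by
  classical
  calc #(traces 𝒞 z) ≤ #(traces 𝒞 z).shatterer := card_le_card_shatterer _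
    _ ≤ ∑ i ∈ Iic (traces 𝒞 z).vcDim, (Fintype.card ι).choose i := card_shatterer_le_sum_vcDim
    _ ≤ ∑ i ∈ Iic d, (Fintype.card ι).choose i :=
        sum_le_sum_of_subset (Iic_subset_Iic.2 (h.vcDim_traces_le z))

-- Multiply by `(d / N) ^ d ≤ (d / N) ^ i` and apply the binomial theorem to `(1 + d / N) ^ N`.
theorem sum_Iic_choose_le {d N : ℕ} (hd : 1 ≤ d) (hdN : d ≤ N) :
    ((∑ i ∈ Iic d, N.choose i : ℕ) : ℝ) ≤ (exp 1 * N / d) ^ d := by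
  have hd0 : (0 : ℝ) < d := by exact_mod_cast hd
  have hN0 : (0 : ℝ) < N := by exact_mod_cast hd.trans hdN
  have hq1 : (d : ℝ) / N ≤ 1 := (div_le_one hN0).2 (by exact_mod_cast hdN)
  have key : ((∑ i ∈ Iic d, N.choose i : ℕ) : ℝ) * ((d : ℝ) / N) ^ d ≤ exp 1 ^ d :=
    calc ((∑ i ∈ Iic d, N.choose i : ℕ) : ℝ) * ((d : ℝ) / N) ^ d
        = ∑ i ∈ Iic d, ((d : ℝ) / N) ^ d * N.choose i := by
          rw [Nat.cast_sum, sum_mul]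
          exact sum_congr rfl fun i _ ↦ mul_comm _ _
      _ ≤ ∑ i ∈ Iic d, ((d : ℝ) / N) ^ i * N.choose i := by
          refine sum_le_sum fun i hi ↦ ?_
          have := pow_le_pow_of_le_one (by positivity) hq1 (mem_Iic.1 hi)
          gcongr
      _ ≤ ∑ i ∈ range (N + 1), ((d : ℝ) / N) ^ i * N.choose i := by
          refine sum_le_sum_of_subset_of_nonneg (fun i hi ↦ ?_) fun i _ _ ↦ by positivity
          have := mem_Iic.1 hi
          exact mem_range.2 (by lia)
      _ = ((d : ℝ) / N + 1) ^ N := by simp [add_pow]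
      _ ≤ exp (d / N) ^ N := by gcongr; exact add_one_le_exp _
      _ = exp 1 ^ d := by
          rw [← exp_nat_mul, ← exp_nat_mul]
          congr 1
          field_simp
  calc ((∑ i ∈ Iic d, N.choose i : ℕ) : ℝ) ≤ exp 1 ^ d / ((d : ℝ) / N) ^ d :=
        (le_div_iff₀ (by positivity)).2 key
    _ = (exp 1 * N / d) ^ d := by rw [← div_pow]; congr 1; field_simp

theorem VCDimLE.card_traces_le_pow (h : VCDimLE 𝒞 d) (hd : 1 ≤ d) (hdι : d ≤ Fintype.card ι)
    (z : ι → E) : (#(traces 𝒞 z) : ℝ) ≤ (exp 1 * Fintype.card ι / d) ^ d :=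
  (Nat.cast_le.2 (h.card_traces_le z)).trans (sum_Iic_choose_le hd hdι)

theorem VCDimLE.image_symmDiff (h : VCDimLE 𝒞 d) (T : Set E) :
    VCDimLE ((symmDiff · T) '' 𝒞) d := by
  classical
  refine fun F hF ↦ h F fun t _ ↦ ?_
  obtain ⟨-, ⟨C, hC, rfl⟩, hCT⟩ := hF {x ∈ F | ¬(x ∈ t ↔ x ∈ T)} (filter_subset _ _)
  refine ⟨C, hC, fun x hx ↦ ?_⟩
  have := hCT x hx
  simp only [mem_filter, hx, true_and, Set.mem_symmDiff] at this
  tauto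

end Traces

section Swap

open Finset

variable {ι : Type*}

open scoped Classical in
/-- The permutation of two copies of `ι` that exchanges `inl i` and `inr i` for `i ∈ σ`. -/
def swapOn (σ : Finset ι) : Equiv.Perm (ι ⊕ ι) :=
  Function.Involutive.toPerm (fun p ↦ if Sum.elim id id p ∈ σ then p.swap else p) fun p ↦ by
    rcases p with i | i <;> by_cases hi : i ∈ σ <;> simp [hi]

variable (σ : Finset ι) (S : Finset (ι ⊕ ι))

theorem map_swapOn_map_swapOn :
    (S.map (swapOn σ).toEmbedding).map (swapOn σ).toEmbedding = S := by
  have swapOn_symm : (swapOn σ).symm = swapOn σ := Function.Involutive.toPerm_symm _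
  ext p
  rw [mem_map_equiv, mem_map_equiv, swapOn_symm]
  nth_rw 1 [← swapOn_symm]
  rw [Equiv.symm_apply_apply]

theorem toLeft_map_swapOn [DecidableEq ι] :
    (S.map (swapOn σ).toEmbedding).toLeft = σ ∩ S.toRight ∪ S.toLeft \ σ := by
  ext i
  simp only [mem_toLeft, mem_map_equiv]
  by_cases hi : i ∈ σ <;> simp [swapOn, Function.Involutive.toPerm, hi]

-- A swap emptying the left copy satisfies `S.toLeft ⊆ σ ⊆ S.toRightᶜ`, which leaves at most
-- `2 ^ (card ι - r)` choices when `S` has `r` points or more.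
theorem card_swapOn_emptying_left_mul_le [Fintype ι] [DecidableEq ι] (r : ℕ) :
    #{σ : Finset ι | (S.map (swapOn σ).toEmbedding).toLeft = ∅ ∧
        r ≤ #(S.map (swapOn σ).toEmbedding).toRight} * 2 ^ r ≤ 2 ^ Fintype.card ι := by
  set V : Finset (Finset ι) := {σ | (S.map (swapOn σ).toEmbedding).toLeft = ∅ ∧
    r ≤ #(S.map (swapOn σ).toEmbedding).toRight}
  rcases V.eq_empty_or_nonempty with hV | ⟨σ₀, hσ₀⟩
  · simp [hV]
  have V_subset : V ⊆ Icc S.toLeft S.toRightᶜ := fun σ hσ ↦ by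
    have hempty := (mem_filter.1 hσ).2.1
    rw [toLeft_map_swapOn, union_eq_empty, sdiff_eq_empty_iff_subset] at hempty
    exact mem_Icc.2 ⟨hempty.2, (subset_compl_iff_disjoint_right).2
      (disjoint_iff_inter_eq_empty.2 hempty.1)⟩
  have hr : r ≤ #S.toLeft + #S.toRight :=
    calc r ≤ #(S.map (swapOn σ₀).toEmbedding).toRight := (mem_filter.1 hσ₀).2.2
      _ ≤ #(S.map (swapOn σ₀).toEmbedding) := card_toRight_le
      _ = #S.toLeft + #S.toRight := by rw [card_map, card_toLeft_add_card_toRight]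
  have left_subset : S.toLeft ⊆ S.toRightᶜ :=
    let hσ₀ := mem_Icc.1 (V_subset hσ₀)
    hσ₀.1.trans hσ₀.2
  have hcard := card_le_card left_subset
  have hcompl := card_add_card_compl S.toRight
  calc #V * 2 ^ r ≤ 2 ^ (#S.toRightᶜ - #S.toLeft) * 2 ^ (#S.toLeft + #S.toRight) := by
        gcongr
        · exact (card_le_card V_subset).trans_eq (card_Icc_finset left_subset)
        · norm_num
    _ = 2 ^ Fintype.card ι := by rw [← pow_add]; congr 1; lia

/-- The double samples on which some member of `𝒟` misses the first half and meets the second half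
at least `r` times. -/
def unbalancedSamples {E : Type*} (ι : Type*) [Fintype ι] (𝒟 : Set (Set E)) (r : ℕ) :
    Set (ι ⊕ ι → E) :=
  {z | ∃ S ∈ traces 𝒟 z, S.toLeft = ∅ ∧ r ≤ #S.toRight}

open scoped Classical in
theorem card_swapOn_unbalancedSamples_mul_le {E : Type*} [Fintype ι] (𝒟 : Set (Set E))
    (z : ι ⊕ ι → E) (r : ℕ) :
    #{σ | z ∘ swapOn σ ∈ unbalancedSamples ι 𝒟 r} * 2 ^ r ≤
      #(traces 𝒟 z) * 2 ^ Fintype.card ι := by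
  set V : Finset (ι ⊕ ι) → Finset (Finset ι) := fun S ↦
    {σ | (S.map (swapOn σ).toEmbedding).toLeft = ∅ ∧ r ≤ #(S.map (swapOn σ).toEmbedding).toRight}
  have cover : ({σ | z ∘ swapOn σ ∈ unbalancedSamples ι 𝒟 r} : Finset (Finset ι)) ⊆
      (traces 𝒟 z).biUnion V := fun σ hσ ↦ by
    obtain ⟨S, hS, hSr⟩ := (mem_filter.1 hσ).2
    refine mem_biUnion.2 ⟨S.map (swapOn σ).toEmbedding, mem_traces_comp_perm.1 hS, ?_⟩
    simpa [V, map_swapOn_map_swapOn] using hSr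
  calc #{σ | z ∘ swapOn σ ∈ unbalancedSamples ι 𝒟 r} * 2 ^ r
      ≤ (∑ S ∈ traces 𝒟 z, #(V S)) * 2 ^ r := by
        gcongr
        exact (card_le_card cover).trans card_biUnion_le
    _ = ∑ S ∈ traces 𝒟 z, #(V S) * 2 ^ r := sum_mul ..
    _ ≤ ∑ S ∈ traces 𝒟 z, 2 ^ Fintype.card ι := by
        gcongr with S
        exact card_swapOn_emptying_left_mul_le S r
    _ = #(traces 𝒟 z) * 2 ^ Fintype.card ι := by rw [sum_const, smul_eq_mul]

end Swap

section Probability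

open Finset ProbabilityTheory
open scoped ENNReal

theorem mul_measureReal_le_prod {Ω Ω' : Type*} [MeasurableSpace Ω] [MeasurableSpace Ω']
    {μ : Measure Ω} [IsFiniteMeasure μ] {ν : Measure Ω'} [IsFiniteMeasure ν]
    {B : Set (Ω × Ω')} (hB : MeasurableSet B) {A : Set Ω} {c : ℝ}
    (h : ∀ a ∈ A, c ≤ ν.real (Prod.mk a ⁻¹' B)) : c * μ.real A ≤ (μ.prod ν).real B := by
  have section_ge : ∀ a ∈ A, ENNReal.ofReal c ≤ ν (Prod.mk a ⁻¹' B) := fun a ha ↦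
    ENNReal.ofReal_le_of_le_toReal (h a ha)
  have markov : ENNReal.ofReal c * μ A ≤ μ.prod ν B :=
    calc ENNReal.ofReal c * μ A
        ≤ ENNReal.ofReal c * μ {a | ENNReal.ofReal c ≤ ν (Prod.mk a ⁻¹' B)} := by
          gcongr
          exact section_ge
      _ ≤ ∫⁻ a, ν (Prod.mk a ⁻¹' B) ∂μ :=
          mul_meas_ge_le_lintegral (measurable_measure_prodMk_left hB) _
      _ = μ.prod ν B := (Measure.prod_apply hB).symm
  calc c * μ.real A ≤ (ENNReal.ofReal c * μ A).toReal := by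
        rw [ENNReal.toReal_mul, ENNReal.toReal_ofReal']
        exact mul_le_mul_of_nonneg_right (le_max_left c 0) measureReal_nonneg
    _ ≤ (μ.prod ν).real B := ENNReal.toReal_mono (measure_ne_top _ _) markov

open scoped Classical in
theorem measureReal_le_of_card_preimage_le {Ω κ : Type*} [MeasurableSpace Ω] [Fintype κ]
    [Nonempty κ] {μ : Measure Ω} [IsProbabilityMeasure μ] {g : κ → Ω → Ω}
    (hg : ∀ i, MeasurePreserving (g i) μ μ) {B : Set Ω} (hB : MeasurableSet B) {c : ℝ}
    (h : ∀ ω, (#{i | g i ω ∈ B} : ℝ) ≤ c * Fintype.card κ) : μ.real B ≤ c := by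
  have integrable_indicator (i : κ) : Integrable ((g i ⁻¹' B).indicator (1 : Ω → ℝ)) μ :=
    (integrable_const 1).indicator ((hg i).measurable hB)
  have average : μ.real B * Fintype.card κ ≤ c * Fintype.card κ :=
    calc μ.real B * Fintype.card κ = ∑ i, μ.real (g i ⁻¹' B) := by
          simp [measureReal_def, (hg _).measure_preimage hB.nullMeasurableSet, mul_comm]
      _ = ∫ ω, ∑ i, (g i ⁻¹' B).indicator (1 : Ω → ℝ) ω ∂μ := by
          rw [integral_finsetSum _ fun i _ ↦ integrable_indicator i]
          exact sum_congr rfl fun i _ ↦ (integral_indicator_one ((hg i).measurable hB)).symm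
      _ ≤ ∫ _, c * Fintype.card κ ∂μ := by
          refine integral_mono (integrable_finsetSum _ fun i _ ↦ integrable_indicator i)
            (integrable_const _) fun ω ↦ ?_
          simpa [Set.indicator_apply] using h ω
      _ = c * Fintype.card κ := by simp
  exact le_of_mul_le_mul_right average (by positivity)

open scoped Classical in
theorem card_mem_eq_sum_indicator {E ι : Type*} [Fintype ι] {A : Set E} :
    (fun b : ι → E ↦ (#{i | b i ∈ A} : ℝ)) = ∑ i : ι, fun b ↦ A.indicator 1 (b i) := by
  ext b
  simp [Finset.sum_apply, Set.indicator_apply]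

variable {E : Type*} [MeasurableSpace E] {P : Measure E} [IsProbabilityMeasure P]
  {ι : Type*} [Fintype ι]

theorem measurePreserving_comp_perm (e : Equiv.Perm ι) :
    MeasurePreserving (fun z : ι → E ↦ z ∘ e) (Measure.pi fun _ ↦ P) (Measure.pi fun _ ↦ P) :=
  measurePreserving_arrowCongr' (fun _ ↦ P) (fun _ ↦ P) e.symm (.refl E) fun _ ↦ .id P

variable {A : Set E}

theorem memLp_indicator_eval (hA : MeasurableSet A) (i : ι) :
    MemLp (fun b : ι → E ↦ A.indicator (1 : E → ℝ) (b i)) 2 (Measure.pi fun _ ↦ P) :=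
  have memLp_indicator : MemLp (A.indicator (1 : E → ℝ)) 2 P := (memLp_const 1).indicator hA
  memLp_indicator.comp_measurePreserving (measurePreserving_eval (fun _ ↦ P) i)

open scoped Classical in
theorem integral_card_mem (hA : MeasurableSet A) :
    ∫ b : ι → E, (#{i | b i ∈ A} : ℝ) ∂(Measure.pi fun _ ↦ P) = Fintype.card ι * P.real A := by
  have integral_indicator_eval (i : ι) :
      ∫ b, A.indicator (1 : E → ℝ) (b i) ∂(Measure.pi fun _ : ι ↦ P) = P.real A :=
    (integral_comp_eval (μ := fun _ : ι ↦ P) (i := i)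
      (measurable_one.indicator hA).aestronglyMeasurable).trans (integral_indicator_one hA)
  rw [card_mem_eq_sum_indicator, Finset.sum_fn,
    integral_finsetSum _ fun i _ ↦ (memLp_indicator_eval hA i).integrable one_le_two]
  simp [integral_indicator_eval]

open scoped Classical in
theorem variance_card_mem_le (hA : MeasurableSet A) :
    Var[fun b : ι → E ↦ (#{i | b i ∈ A} : ℝ); Measure.pi fun _ ↦ P] ≤
      Fintype.card ι * P.real A := by
  have memLp_indicator : MemLp (A.indicator (1 : E → ℝ)) 2 P := (memLp_const 1).indicator hA
  calc Var[fun b : ι → E ↦ (#{i | b i ∈ A} : ℝ); Measure.pi fun _ ↦ P]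
      = ∑ _i : ι, Var[A.indicator 1; P] := by
        rw [card_mem_eq_sum_indicator]
        exact variance_sum_pi fun _ ↦ memLp_indicator
    _ ≤ ∑ _i : ι, P.real A := by
        refine sum_le_sum fun _ _ ↦
          (variance_le_expectation_sq memLp_indicator.aestronglyMeasurable).trans_eq ?_
        rw [← integral_indicator_one hA]
        congr 1 with v
        by_cases hv : v ∈ A <;> simp [hv]
    _ = Fintype.card ι * P.real A := by simp

open scoped Classical in
theorem half_le_measureReal_card_mem_ge (hA : MeasurableSet A)
    (hcard : 8 ≤ Fintype.card ι * P.real A) :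
    1 / 2 ≤ (Measure.pi fun _ : ι ↦ P).real
      {b | Fintype.card ι * P.real A / 2 ≤ #{i | b i ∈ A}} := by
  set μ := Measure.pi fun _ : ι ↦ P
  set mean := Fintype.card ι * P.real A
  set X : (ι → E) → ℝ := fun b ↦ #{i | b i ∈ A}
  have X_mean : μ[X] = mean := integral_card_mem hA
  have X_memLp : MemLp X 2 μ := by
    simp only [X, card_mem_eq_sum_indicator]
    exact memLp_finsetSum' _ fun i _ ↦ memLp_indicator_eval hA i
  have deviation_le : μ.real {b | mean / 2 ≤ |X b - μ[X]|} ≤ 1 / 2 :=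
    calc μ.real {b | mean / 2 ≤ |X b - μ[X]|} ≤ Var[X; μ] / (mean / 2) ^ 2 :=
          ENNReal.toReal_le_of_le_ofReal (by have := variance_nonneg X μ; positivity)
            (meas_ge_le_variance_div_sq X_memLp (by linarith))
      _ ≤ mean / (mean / 2) ^ 2 := by
          gcongr
          exact variance_card_mem_le hA
      _ ≤ 1 / 2 := by
          rw [div_le_div_iff₀ (by positivity) two_pos]
          nlinarith
  have cover : Set.univ ⊆ {b | mean / 2 ≤ X b} ∪ {b | mean / 2 ≤ |X b - μ[X]|} := by
    refine fun b _ ↦ or_iff_not_imp_left.2 fun hb ↦ ?_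
    have hb : X b < mean / 2 := not_le.1 hb
    change mean / 2 ≤ |X b - μ[X]|
    rw [X_mean]
    linarith [neg_abs_le (X b - mean)]
  have total := (measureReal_mono (μ := μ) cover).trans (measureReal_union_le _ _)
  rw [probReal_univ] at total
  linarith

end Probability

section EpsilonNet

open Finset

variable {E : Type*} [MeasurableSpace E] {ι : Type*} [Fintype ι]

/-- Every trace of the class `𝒞` on samples indexed by `ι` is realized on a measurable set of
samples. This is the form in which measurability of events quantified over `𝒞` is used. -/
def MeasurableTraces (ι : Type*) [Fintype ι] (𝒞 : Set (Set E)) : Prop :=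
  ∀ S : Finset ι, MeasurableSet {z : ι → E | S ∈ traces 𝒞 z}

variable {𝒞 𝒟 : Set (Set E)}

theorem MeasurableTraces.measurableSet_unbalancedSamples (h : MeasurableTraces (ι ⊕ ι) 𝒟) (r : ℕ) :
    MeasurableSet (unbalancedSamples ι 𝒟 r) := by
  have heq : unbalancedSamples ι 𝒟 r =
      ⋃ S ∈ {S : Finset (ι ⊕ ι) | S.toLeft = ∅ ∧ r ≤ #S.toRight}, {z | S ∈ traces 𝒟 z} := by
    ext z
    simp [unbalancedSamples, and_comm]
  rw [heq]
  exact .biUnion (Set.to_countable _) fun S _ ↦ h S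

theorem MeasurableTraces.image_symmDiff (h : MeasurableTraces ι 𝒞) {T : Set E}
    (hT : MeasurableSet T) : MeasurableTraces ι ((symmDiff · T) '' 𝒞) := by
  classical
  intro S
  have heq : {z : ι → E | S ∈ traces ((symmDiff · T) '' 𝒞) z} =
      ⋃ U : Finset ι, {z | symmDiff S U ∈ traces 𝒞 z} ∩ ⋂ i, {z | i ∈ U ↔ z i ∈ T} := by
    ext z
    simp only [mem_traces, Set.mem_iUnion, Set.mem_inter_iff, Set.mem_iInter, Set.mem_ofPred_eq,
      Set.exists_mem_image]
    constructor
    · rintro ⟨C, hC, hS⟩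
      refine ⟨({i | z i ∈ T} : Finset ι), ⟨C, hC, fun i ↦ ?_⟩, fun i ↦ by simp⟩
      simp only [Finset.mem_symmDiff, mem_filter_univ, hS, Set.mem_symmDiff]
      tauto
    · rintro ⟨U, ⟨C, hC, hS⟩, hU⟩
      refine ⟨C, hC, fun i ↦ ?_⟩
      have := hS i
      simp only [Finset.mem_symmDiff, hU] at this
      simp only [Set.mem_symmDiff, ← this]
      tauto
  rw [heq]
  exact .iUnion fun U ↦ (h _).inter <| .iInter fun i ↦
    (MeasurableSet.const _).iff (measurable_pi_apply i hT)

variable {P : Measure E} [IsProbabilityMeasure P]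

theorem measureReal_unbalancedSamples_le (h𝒟 : MeasurableTraces (ι ⊕ ι) 𝒟) {N : ℝ}
    (hN : ∀ z : ι ⊕ ι → E, #(traces 𝒟 z) ≤ N) (r : ℕ) :
    (Measure.pi fun _ : ι ⊕ ι ↦ P).real (unbalancedSamples ι 𝒟 r) ≤ N / 2 ^ r := by
  classical
  refine measureReal_le_of_card_preimage_le (fun σ ↦ measurePreserving_comp_perm (swapOn σ))
    (h𝒟.measurableSet_unbalancedSamples r) fun z ↦ ?_
  rw [Fintype.card_finset, Nat.cast_pow, Nat.cast_two, div_mul_eq_mul_div,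
    le_div_iff₀ (by positivity)]
  calc (#{σ | z ∘ swapOn σ ∈ unbalancedSamples ι 𝒟 r} : ℝ) * 2 ^ r
      ≤ #(traces 𝒟 z) * 2 ^ Fintype.card ι :=
        by exact_mod_cast card_swapOn_unbalancedSamples_mul_le 𝒟 z r
    _ ≤ N * 2 ^ Fintype.card ι := by gcongr; exact hN z

-- A member missed by the first half of a double sample is met at least `ε * card ι / 2` times by
-- the second half with probability at least `1 / 2`.
theorem measureReal_exists_disjoint_sample_le (h𝒟 : MeasurableTraces (ι ⊕ ι) 𝒟)
    (hmeas : ∀ D ∈ 𝒟, MeasurableSet D) {N : ℝ} (hN : ∀ z : ι ⊕ ι → E, #(traces 𝒟 z) ≤ N)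
    {ε : ℝ} (hε : 8 ≤ ε * Fintype.card ι) :
    (Measure.pi fun _ : ι ↦ P).real {a | ∃ D ∈ 𝒟, (∀ i, a i ∉ D) ∧ ε ≤ P.real D} ≤
      2 * (N / 2 ^ ⌈ε * Fintype.card ι / 2⌉₊) := by
  classical
  set r := ⌈ε * Fintype.card ι / 2⌉₊
  set A : Set (ι → E) := {a | ∃ D ∈ 𝒟, (∀ i, a i ∉ D) ∧ ε ≤ P.real D}
  set split := MeasurableEquiv.sumPiEquivProdPi fun _ : ι ⊕ ι ↦ E
  have split_preserving : MeasurePreserving split.symm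
      ((Measure.pi fun _ : ι ↦ P).prod (Measure.pi fun _ : ι ↦ P)) (Measure.pi fun _ ↦ P) :=
    (measurePreserving_sumPiEquivProdPi fun _ : ι ⊕ ι ↦ P).symm
  have measurableSet_unbalanced := h𝒟.measurableSet_unbalancedSamples r
  have section_ge : ∀ a ∈ A, 1 / 2 ≤ (Measure.pi fun _ : ι ↦ P).real
      (Prod.mk a ⁻¹' (split.symm ⁻¹' unbalancedSamples ι 𝒟 r)) := by
    rintro a ⟨D, hD, haD, hεD⟩
    have hε' : ε * Fintype.card ι ≤ Fintype.card ι * P.real D := by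
      rw [mul_comm]; gcongr
    refine (half_le_measureReal_card_mem_ge (hmeas D hD) (hε.trans hε')).trans
      (measureReal_mono fun b hb ↦ ?_)
    have split_inl (i : ι) : split.symm (a, b) (.inl i) = a i := rfl
    have split_inr (i : ι) : split.symm (a, b) (.inr i) = b i := rfl
    set S : Finset (ι ⊕ ι) := {p | split.symm (a, b) p ∈ D}
    have toLeft_S : S.toLeft = ∅ :=
      eq_empty_of_forall_notMem fun i hi ↦ haD i (by simpa [S, split_inl] using hi)
    have toRight_S : S.toRight = ({i | b i ∈ D} : Finset ι) := by
      ext i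
      simp [S, split_inr]
    refine ⟨S, mem_traces.2 ⟨D, hD, fun p ↦ mem_filter_univ p⟩, toLeft_S, ?_⟩
    rw [toRight_S, Nat.ceil_le]
    exact le_trans (by gcongr) hb
  have doubling := mul_measureReal_le_prod (μ := Measure.pi fun _ : ι ↦ P)
    (split.symm.measurable measurableSet_unbalanced) section_ge
  rw [split_preserving.measureReal_preimage measurableSet_unbalanced.nullMeasurableSet] at doubling
  linarith [measureReal_unbalancedSamples_le (P := P) h𝒟 hN r]

end EpsilonNet

section SampleComplexity

theorem two_mul_le_two_rpow {w : ℝ} (hw : 2 ≤ w) : 2 * w ≤ 2 ^ w := by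
  have bernoulli : 1 + (w - 1) * 1 ≤ (1 + 1) ^ (w - 1) :=
    one_add_mul_self_le_rpow_one_add (by norm_num) (by linarith)
  calc 2 * w = 2 * (1 + (w - 1) * 1) := by ring
    _ ≤ 2 * (1 + 1) ^ (w - 1) := by gcongr
    _ = 2 ^ w := by rw [one_add_one_eq_two, rpow_sub_one two_ne_zero]; ring

theorem four_le_logb_eight_exp_div {ε : ℝ} (hε : 0 < ε) (hε1 : ε ≤ 1) :
    4 ≤ logb 2 (8 * exp 1 / ε) := by
  have exp_ge : (2 : ℝ) ≤ exp 1 := by linarith [add_one_le_exp (1 : ℝ)]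
  rw [le_logb_iff_rpow_le one_lt_two (by positivity), le_div_iff₀ hε]
  norm_num
  linarith

theorem mul_le_of_sampleComplexity {d : ℕ} {ε m : ℝ} (hε : 0 < ε) (hε1 : ε ≤ 1)
    (hm : 8 * d / ε * logb 2 (8 * exp 1 / ε) ≤ m) : 32 * d ≤ ε * m :=
  calc 32 * d = ε * (8 * d / ε * 4) := by field_simp; ring
    _ ≤ ε * (8 * d / ε * logb 2 (8 * exp 1 / ε)) := by
        gcongr
        exact four_le_logb_eight_exp_div hε hε1
    _ ≤ ε * m := by gcongr

-- With `t = ε * m / (8 * d)`, the base of the power is `2 * t * (8 * e / ε) ≤ 2 ^ t * 2 ^ t`.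
theorem pow_le_two_rpow_of_sampleComplexity {d : ℕ} (hd : 1 ≤ d) {ε m : ℝ} (hε : 0 < ε)
    (hε1 : ε ≤ 1) (hm : 8 * d / ε * logb 2 (8 * exp 1 / ε) ≤ m) :
    (exp 1 * (2 * m) / d) ^ d ≤ (2 : ℝ) ^ (ε * m / 4) := by
  have hd0 : (0 : ℝ) < d := by exact_mod_cast hd
  set t := ε * m / (8 * d) with t_def
  have logb_le : logb 2 (8 * exp 1 / ε) ≤ t := by
    rw [t_def, le_div_iff₀ (by positivity), ← div_le_iff₀' hε]
    exact le_of_eq_of_le (by ring) hm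
  have two_le_t : 2 ≤ t := by linarith [four_le_logb_eight_exp_div hε hε1]
  have hm0 : 0 < m :=
    pos_of_mul_pos_right ((by positivity : 0 < 32 * (d : ℝ)).trans_le
      (mul_le_of_sampleComplexity hε hε1 hm)) hε.le
  have base_le : exp 1 * (2 * m) / d ≤ 2 ^ (2 * t) :=
    calc exp 1 * (2 * m) / d = 2 * t * (8 * exp 1 / ε) := by rw [t_def]; field_simp
      _ ≤ 2 ^ t * 2 ^ t := by
          gcongr
          · exact two_mul_le_two_rpow two_le_t
          · exact (logb_le_iff_le_rpow one_lt_two (by positivity)).1 logb_le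
      _ = 2 ^ (2 * t) := by rw [← rpow_add two_pos, two_mul]
  calc (exp 1 * (2 * m) / d) ^ d ≤ (2 ^ (2 * t)) ^ d := by gcongr
    _ = (2 : ℝ) ^ (ε * m / 4) := by
        rw [← rpow_mul_natCast two_pos.le]
        congr 1
        rw [t_def]
        field_simp
        ring

theorem two_mul_div_two_pow_ceil_le_of_sampleComplexity {ε δ m : ℝ} (hε : 0 < ε) (hδ : 0 < δ)
    (hm : 4 / ε * logb 2 (2 / δ) ≤ m) :
    2 * ((2 : ℝ) ^ (ε * m / 4) / 2 ^ ⌈ε * m / 2⌉₊) ≤ δ := by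
  have two_div_le : 2 / δ ≤ (2 : ℝ) ^ (ε * m / 4) := by
    rw [← logb_le_iff_le_rpow one_lt_two (by positivity), le_div_iff₀ four_pos,
      ← div_le_iff₀' hε]
    exact le_of_eq_of_le (by ring) hm
  calc 2 * ((2 : ℝ) ^ (ε * m / 4) / 2 ^ ⌈ε * m / 2⌉₊)
      ≤ 2 * (2 ^ (ε * m / 4) / 2 ^ (ε * m / 2)) := by
        rw [← rpow_natCast]
        gcongr
        · exact one_le_two
        · exact Nat.le_ceil _
    _ = 2 / 2 ^ (ε * m / 4) := by
        rw [← rpow_sub two_pos, div_eq_mul_inv 2, ← rpow_neg two_pos.le]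
        congr 2
        ring
    _ ≤ δ := div_le_of_le_mul₀ (by positivity) hδ.le ((div_le_iff₀' hδ).1 two_div_le)

end SampleComplexity

section PAC

open Finset

variable {E : Type*} [MeasurableSpace E] {P : Measure E} [IsProbabilityMeasure P]
  {ι : Type*} [Fintype ι] {𝒞 : Set (Set E)} {d : ℕ}

theorem VCDimLE.measureReal_exists_consistent_le (hVC : VCDimLE 𝒞 d) (hd : 1 ≤ d)
    (hmeas : ∀ C ∈ 𝒞, MeasurableSet C) (h𝒞 : MeasurableTraces (ι ⊕ ι) 𝒞) {T : Set E}
    (hT : MeasurableSet T) {ε δ : ℝ} (hε : 0 < ε) (hε1 : ε ≤ 1) (hδ : 0 < δ)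
    (hm : max (8 * d / ε * logb 2 (8 * exp 1 / ε)) (4 / ε * logb 2 (2 / δ)) ≤ Fintype.card ι) :
    (Measure.pi fun _ : ι ↦ P).real
      {a | ∃ C ∈ 𝒞, (∀ i, a i ∈ C ↔ a i ∈ T) ∧ ε < P.real (symmDiff C T)} ≤ δ := by
  set m := Fintype.card ι
  set 𝒟 := (symmDiff · T) '' 𝒞
  obtain ⟨hmd, hmδ⟩ := max_le_iff.1 hm
  have hd0 : (1 : ℝ) ≤ d := by exact_mod_cast hd
  have large_sample : 32 * d ≤ ε * m := mul_le_of_sampleComplexity hε hε1 hmd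
  have card_traces_le (z : ι ⊕ ι → E) : #(traces 𝒟 z) ≤ (2 : ℝ) ^ (ε * m / 4) := by
    have hdm : d ≤ Fintype.card (ι ⊕ ι) := by
      rw [Fintype.card_sum, ← Nat.cast_le (α := ℝ), Nat.cast_add]
      nlinarith
    calc (#(traces 𝒟 z) : ℝ) ≤ (exp 1 * Fintype.card (ι ⊕ ι) / d) ^ d :=
          (hVC.image_symmDiff T).card_traces_le_pow hd hdm z
      _ = (exp 1 * (2 * m) / d) ^ d := by rw [Fintype.card_sum, Nat.cast_add, ← two_mul]
      _ ≤ 2 ^ (ε * m / 4) := pow_le_two_rpow_of_sampleComplexity hd hε hε1 hmd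
  have measurableSet_mem : ∀ D ∈ 𝒟, MeasurableSet D :=
    Set.forall_mem_image.2 fun C hC ↦ (hmeas C hC).symmDiff hT
  calc (Measure.pi fun _ : ι ↦ P).real
        {a | ∃ C ∈ 𝒞, (∀ i, a i ∈ C ↔ a i ∈ T) ∧ ε < P.real (symmDiff C T)}
      ≤ (Measure.pi fun _ : ι ↦ P).real {a | ∃ D ∈ 𝒟, (∀ i, a i ∉ D) ∧ ε ≤ P.real D} := by
        refine measureReal_mono ?_
        rintro a ⟨C, hC, hCT, hεC⟩
        refine ⟨symmDiff C T, Set.mem_image_of_mem _ hC, fun i ↦ ?_, hεC.le⟩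
        simp [Set.mem_symmDiff, hCT i]
    _ ≤ 2 * (2 ^ (ε * m / 4) / 2 ^ ⌈ε * m / 2⌉₊) :=
        measureReal_exists_disjoint_sample_le (h𝒞.image_symmDiff hT) measurableSet_mem
          card_traces_le (by linarith)
    _ ≤ δ := two_mul_div_two_pow_ceil_le_of_sampleComplexity hε hδ hmδ

end PAC

section HalfSpaces

open Finset Module

/-- The class of sets `{x | 0 ≤ f x y}` with parameter `y` in `K`, for a real-valued `f`. -/
def nonnegSets {E Y : Type*} (f : E → Y → ℝ) (K : Set Y) : Set (Set E) :=
  (fun y ↦ {x | 0 ≤ f x y}) '' K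

theorem mem_traces_nonnegSets {E Y ι : Type*} [Fintype ι] {f : E → Y → ℝ} {K : Set Y} {z : ι → E}
    {S : Finset ι} : S ∈ traces (nonnegSets f K) z ↔ ∃ y ∈ K, ∀ i, i ∈ S ↔ 0 ≤ f (z i) y := by
  simp [mem_traces, nonnegSets]

section Dudley

variable {E V : Type*} [AddCommGroup V] [Module ℝ V] {φ : E → Dual ℝ V} {W : Submodule ℝ V}
  {F : Finset E}

-- Cut out of `F` the points with nonnegative coefficient: on the resulting parameter, every term
-- of the relation is nonnegative, and a term with negative coefficient is positive.
theorem coeff_nonneg_of_isShattered (hF : IsShattered (nonnegSets (fun x v ↦ φ x v) W) F)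
    {g : E → ℝ} (hg : ∀ v ∈ W, ∑ x ∈ F, g x * φ x v = 0) : ∀ x ∈ F, 0 ≤ g x := by
  obtain ⟨-, ⟨v, hv, rfl⟩, hsign⟩ := hF {x ∈ F | 0 ≤ g x} (filter_subset _ _)
  replace hsign : ∀ x ∈ F, (0 ≤ g x ↔ 0 ≤ φ x v) := fun x hx ↦ by simpa [hx] using hsign x hx
  have term_nonneg : ∀ x ∈ F, 0 ≤ g x * φ x v := fun x hx ↦ by
    rcases le_or_gt 0 (g x) with h | h
    · exact mul_nonneg h ((hsign x hx).1 h)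
    · exact mul_nonneg_of_nonpos_of_nonpos h.le (not_le.1 (h.not_ge ∘ (hsign x hx).2)).le
  intro x hx
  by_contra! hgx
  have term_pos : 0 < g x * φ x v :=
    mul_pos_of_neg_of_neg hgx (not_le.1 (hgx.not_ge ∘ (hsign x hx).2))
  exact (sum_pos' term_nonneg ⟨x, hx, term_pos⟩).ne' (hg v hv)

-- Dudley's bound: functionals on `W` attached to the points of a shattered set are independent.
theorem vcDimLE_nonnegSets_submodule [FiniteDimensional ℝ W] :
    VCDimLE (nonnegSets (fun x v ↦ φ x v) W) (finrank ℝ W) := by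
  intro F hF
  have independent : LinearIndepOn ℝ (fun x ↦ (φ x).domRestrict W) (F : Set E) := by
    refine linearIndepOn_finset_iff.2 fun g hg x hx ↦ ?_
    have relation : ∀ v ∈ W, ∑ x ∈ F, g x * φ x v = 0 := fun v hv ↦ by
      simpa using LinearMap.congr_fun hg ⟨v, hv⟩
    have neg_relation : ∀ v ∈ W, ∑ x ∈ F, -g x * φ x v = 0 := fun v hv ↦ by
      simp [relation v hv]
    exact le_antisymm (neg_nonneg.1 (coeff_nonneg_of_isShattered hF neg_relation x hx))
      (coeff_nonneg_of_isShattered hF relation x hx)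
  calc #F = Fintype.card F := (Fintype.card_coe F).symm
    _ ≤ finrank ℝ (Dual ℝ W) := independent.linearIndependent.fintype_card_le_finrank
    _ = finrank ℝ W := Subspace.dual_finrank_eq

end Dudley

theorem isSigmaCompact_isClosed_inter_isOpen {X : Type*} [PseudoEMetricSpace X]
    [SigmaCompactSpace X] {C U : Set X} (hC : IsClosed C) (hU : IsOpen U) :
    IsSigmaCompact (C ∩ U) := by
  obtain ⟨F, hF, -, rfl, -⟩ := hU.exists_iUnion_isClosed
  rw [Set.inter_iUnion]
  exact isSigmaCompact_iUnion _ fun i ↦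
    isSigmaCompact_univ.of_isClosed_subset (hC.inter (hF i)) (Set.subset_univ _)

theorem measurableSet_of_isSigmaCompact {X : Type*} [TopologicalSpace X] [T2Space X]
    [MeasurableSpace X] [OpensMeasurableSpace X] {A : Set X} (hA : IsSigmaCompact A) :
    MeasurableSet A := by
  obtain ⟨K, hK, rfl⟩ := hA
  exact .iUnion fun i ↦ (hK i).measurableSet

-- The samples realizing a trace are the projection of a σ-compact set of parameters and samples.
theorem measurableTraces_nonnegSets {E Y ι : Type*} [EMetricSpace E] [SigmaCompactSpace E]
    [MeasurableSpace E] [OpensMeasurableSpace E] [PseudoEMetricSpace Y] [SigmaCompactSpace Y]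
    [Fintype ι] {f : E → Y → ℝ} (hf : Continuous f.uncurry) {K : Set Y} (hK : IsClosed K) :
    MeasurableTraces ι (nonnegSets f K) := by
  have := EMetric.secondCountable_of_sigmaCompact E
  intro S
  have continuous_eval (i : ι) : Continuous fun p : Y × (ι → E) ↦ f (p.2 i) p.1 :=
    hf.comp (by fun_prop : Continuous fun p : Y × (ι → E) ↦ (p.2 i, p.1))
  set C : Set (Y × (ι → E)) := Prod.fst ⁻¹' K ∩ ⋂ i ∈ S, {p | 0 ≤ f (p.2 i) p.1}
  set U : Set (Y × (ι → E)) := ⋂ i ∈ (S : Set ι)ᶜ, {p | f (p.2 i) p.1 < 0}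
  have isClosed_C : IsClosed C := (hK.preimage continuous_fst).inter <|
    isClosed_biInter fun i _ ↦ isClosed_le continuous_const (continuous_eval i)
  have isOpen_U : IsOpen U := (Set.toFinite _).isOpen_biInter fun i _ ↦
    isOpen_lt (continuous_eval i) continuous_const
  have eq_image : {z : ι → E | S ∈ traces (nonnegSets f K) z} = Prod.snd '' (C ∩ U) := by
    ext z
    simp only [Set.mem_ofPred_eq, mem_traces_nonnegSets, Set.mem_image, Prod.exists,
      exists_eq_right]
    refine exists_congr fun y ↦ ?_
    simp only [C, U, Set.mem_inter_iff, Set.mem_preimage, Set.mem_iInter, Set.mem_ofPred_eq,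
      Set.mem_compl_iff, mem_coe, and_assoc, ← forall_and]
    refine and_congr_right fun _ ↦ forall_congr' fun i ↦ ?_
    by_cases hi : i ∈ S <;> simp [hi]
  rw [eq_image]
  exact measurableSet_of_isSigmaCompact
    ((isSigmaCompact_isClosed_inter_isOpen isClosed_C isOpen_U).image continuous_snd)

end HalfSpaces

section SparseHalfSpaces

open Finset Module Matrix

variable {n k : ℕ}

/-- The half-spaces `{v | 0 ≤ ⟨v, y⟩}` generated by the `k`-sparse vectors `y` of `ℝ^n`. -/
def sparseHalfSpaces (n k : ℕ) : Set (Set (Fin n → ℝ)) :=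
  nonnegSets (fun v y ↦ v ⬝ᵥ y) {y | sparse n k y}

/-- The vectors of `ℝ^n` supported on `s`. -/
def supportedOn (s : Finset (Fin n)) : Submodule ℝ (Fin n → ℝ) :=
  Submodule.span ℝ (Pi.basisFun ℝ (Fin n) '' s)

theorem mem_supportedOn {s : Finset (Fin n)} {y : Fin n → ℝ} :
    y ∈ supportedOn s ↔ ∀ i ∉ s, y i = 0 := by
  simp only [supportedOn, Basis.mem_span_image, Set.subset_def, mem_coe, Finsupp.mem_support_iff,
    Pi.basisFun_repr]
  exact forall_congr' fun i ↦ not_imp_comm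

theorem finrank_supportedOn_le (s : Finset (Fin n)) : finrank ℝ (supportedOn s) ≤ #s := by
  classical
  rw [supportedOn, ← coe_image]
  exact (finrank_span_finset_le_card _).trans card_image_le

theorem isClosed_setOf_sparse : IsClosed {y | sparse n k y} := by
  have heq : {y | sparse n k y} = ⋃ s ∈ {s : Finset (Fin n) | #s ≤ k}, supportedOn s := by
    ext y
    simp [sparse, mem_supportedOn]
  rw [heq]
  exact (Set.toFinite _).isClosed_biUnion fun s _ ↦ (supportedOn s).closed_of_finiteDimensional

theorem measurableSet_of_mem_sparseHalfSpaces :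
    ∀ C ∈ sparseHalfSpaces n k, MeasurableSet C :=
  Set.forall_mem_image.2 fun y _ ↦ measurableSet_le measurable_const <| by
    simp only [dotProduct]
    fun_prop

theorem measurableTraces_sparseHalfSpaces {ι : Type*} [Fintype ι] :
    MeasurableTraces ι (sparseHalfSpaces n k) :=
  measurableTraces_nonnegSets (by simp only [dotProduct, Function.uncurry_def]; fun_prop)
    isClosed_setOf_sparse

theorem sparseHalfSpaces_subset (hkn : k ≤ n) : sparseHalfSpaces n k ⊆
    ⋃ s ∈ powersetCard k univ, nonnegSets (fun v y ↦ v ⬝ᵥ y) (supportedOn (n := n) s) := by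
  rintro - ⟨y, ⟨s, hs, hys⟩, rfl⟩
  obtain ⟨t, hst, ht⟩ := exists_superset_card_eq hs (by simpa using hkn)
  exact Set.mem_biUnion (mem_powersetCard_univ.2 ht) <|
    Set.mem_image_of_mem _ (mem_supportedOn.2 fun i hi ↦ hys i (mt (@hst i) hi))

theorem card_traces_sparseHalfSpaces_le {ι : Type*} [Fintype ι] (hkn : k ≤ n)
    (z : ι → Fin n → ℝ) : #(traces (sparseHalfSpaces n k) z) ≤
      n.choose k * ∑ i ∈ Iic k, (Fintype.card ι).choose i := by
  classical
  set 𝒜 := fun s : Finset (Fin n) ↦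
    nonnegSets (fun v y ↦ v ⬝ᵥ y) (supportedOn s : Set (Fin n → ℝ))
  have vcDim_le {s : Finset (Fin n)} (hs : s ∈ powersetCard k univ) : VCDimLE (𝒜 s) k :=
    (vcDimLE_nonnegSets_submodule (φ := dotProductBilin ℝ ℝ)).mono <|
      (finrank_supportedOn_le s).trans_eq (mem_powersetCard_univ.1 hs)
  calc #(traces (sparseHalfSpaces n k) z)
      ≤ #((powersetCard k univ).biUnion fun s ↦ traces (𝒜 s) z) := by
        rw [← traces_biUnion]
        exact card_le_card (traces_mono (sparseHalfSpaces_subset hkn))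
    _ ≤ #(powersetCard k (univ : Finset (Fin n))) * ∑ i ∈ Iic k, (Fintype.card ι).choose i :=
        card_biUnion_le_card_mul _ _ _ fun s hs ↦ (vcDim_le hs).card_traces_le z
    _ = n.choose k * ∑ i ∈ Iic k, (Fintype.card ι).choose i := by simp

-- With `u = N / k`, the hypothesis says `2 ^ u ≤ b * u`; were `b < 2 ^ (u / 2)`, this would give
-- `2 ^ (u / 2) < u`.
theorem le_two_mul_logb_of_two_pow_le {b : ℝ} (hb : 4 ≤ b) {k N : ℕ} (hk : 1 ≤ k)
    (h : (2 : ℝ) ^ N ≤ (b * N / k) ^ k) : (N : ℝ) ≤ 2 * k * logb 2 b := by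
  have hk0 : (0 : ℝ) < k := by exact_mod_cast hk
  set u : ℝ := N / k
  have N_eq : (N : ℝ) = u * k := (div_mul_cancel₀ _ hk0.ne').symm
  have two_rpow_le : 2 ^ u ≤ b * u := by
    refine (pow_le_pow_iff_left₀ (by positivity) (by positivity) (by lia : k ≠ 0)).1 ?_
    rwa [← rpow_mul_natCast two_pos.le, ← N_eq, rpow_natCast, ← mul_div_assoc]
  suffices u / 2 ≤ logb 2 b by rw [N_eq]; nlinarith
  by_contra! hu
  have b_lt : b < 2 ^ (u / 2) := (logb_lt_iff_lt_rpow one_lt_two (by linarith)).1 hu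
  have two_le_logb : 2 ≤ logb 2 b :=
    (le_logb_iff_rpow_le one_lt_two (by linarith)).2 (by norm_num [hb])
  have rpow_lt : 2 ^ (u / 2) * 2 ^ (u / 2) < 2 ^ (u / 2) * u :=
    calc (2 : ℝ) ^ (u / 2) * 2 ^ (u / 2) = 2 ^ u := by rw [← rpow_add two_pos, add_halves]
      _ ≤ b * u := two_rpow_le
      _ < 2 ^ (u / 2) * u := mul_lt_mul_of_pos_right b_lt (by linarith)
  have := lt_of_mul_lt_mul_left rpow_lt (by positivity)
  linarith [two_mul_le_two_rpow (two_le_logb.trans hu.le)]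

theorem four_le_mul_exp_one (hn : 2 ≤ n) : 4 ≤ n * exp 1 := by
  have hn0 : (2 : ℝ) ≤ n := by exact_mod_cast hn
  nlinarith [add_one_le_exp (1 : ℝ)]

theorem two_le_logb_mul_exp_one (hn : 2 ≤ n) : 2 ≤ logb 2 (n * exp 1) := by
  have := four_le_mul_exp_one hn
  exact (le_logb_iff_rpow_le one_lt_two (by linarith)).2 (by norm_num [this])

theorem vcDimLE_sparseHalfSpaces (hn : 2 ≤ n) (hk1 : 1 ≤ k) (hkn : k ≤ n) :
    VCDimLE (sparseHalfSpaces n k) ⌊2 * k * logb 2 (n * exp 1)⌋₊ := by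
  intro F hF
  refine Nat.le_floor ?_
  have hk0 : (1 : ℝ) ≤ k := by exact_mod_cast hk1
  rcases le_total #F k with hFk | hFk
  · have hFk : (#F : ℝ) ≤ k := by exact_mod_cast hFk
    nlinarith [two_le_logb_mul_exp_one hn]
  refine le_two_mul_logb_of_two_pow_le (four_le_mul_exp_one hn) hk1 ?_
  calc (2 : ℝ) ^ #F ≤ (n.choose k * ∑ i ∈ Iic k, (#F).choose i : ℕ) := by
        exact_mod_cast hF.two_pow_card_le.trans <| by
          simpa using card_traces_sparseHalfSpaces_le hkn ((↑) : F → Fin n → ℝ)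
    _ ≤ n ^ k * (exp 1 * #F / k) ^ k := by
        rw [Nat.cast_mul]
        gcongr
        · exact_mod_cast Nat.choose_le_pow n k
        · exact sum_Iic_choose_le hk1 hFk
    _ = (n * exp 1 * #F / k) ^ k := by rw [← mul_pow]; ring

end SparseHalfSpaces

theorem consistent_obcs_pac_general (n k : ℕ) (hn : 2 ≤ n) (hk1 : 1 ≤ k) (hkn : k ≤ n)
    (P : Measure (Fin n → ℝ)) [IsProbabilityMeasure P] (T : Set (Fin n → ℝ))
    (hT : MeasurableSet T) (ε δ : ℝ) (hε : ε ∈ Set.Ioc (0 : ℝ) 1) (hδ : 0 < δ) (m : ℕ)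
    (hm : max (8 * ⌊2 * k * logb 2 (n * exp 1)⌋₊ / ε * logb 2 (8 * exp 1 / ε))
      (4 / ε * logb 2 (2 / δ)) ≤ m) :
    (Measure.pi fun _ : Fin m ↦ P)
      {a | ∃ y, sparse n k y ∧ (∀ i, 0 ≤ ∑ j, a i j * y j ↔ a i ∈ T) ∧
        ε < (P {v | ¬(0 ≤ ∑ j, v j * y j ↔ v ∈ T)}).toReal} ≤ ENNReal.ofReal δ := by
  have hk0 : (1 : ℝ) ≤ k := by exact_mod_cast hk1
  have one_le_vcDim : 1 ≤ ⌊2 * k * logb 2 (n * exp 1)⌋₊ :=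
    Nat.le_floor (by push_cast; nlinarith [two_le_logb_mul_exp_one hn])
  refine (ENNReal.le_ofReal_iff_toReal_le (measure_ne_top _ _) hδ.le).2 ?_
  refine le_trans (measureReal_mono ?_) <|
    (vcDimLE_sparseHalfSpaces hn hk1 hkn).measureReal_exists_consistent_le one_le_vcDim
      measurableSet_of_mem_sparseHalfSpaces measurableTraces_sparseHalfSpaces hT hε.1 hε.2 hδ
      (hm.trans_eq (by rw [Fintype.card_fin]))
  rintro a ⟨y, hy, hconsistent, herror⟩
  refine ⟨_, Set.mem_image_of_mem _ hy, hconsistent, herror.trans_eq ?_⟩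
  congr 2
  ext v
  simp only [Set.mem_ofPred_eq, Set.mem_symmDiff, dotProduct]
  tauto

theorem consistent_obcs_pac (n k : ℕ) (hn : 2 ≤ n) (hk1 : 1 ≤ k) (hkn : k ≤ n)
    (P : Measure (Fin n → ℝ)) [IsProbabilityMeasure P]
    (x : Fin n → ℝ) (hx : sparse n k x)
    (ε δ : ℝ) (hε : ε ∈ Set.Ioo (0 : ℝ) 1) (hδ : δ ∈ Set.Ioo (0 : ℝ) 1)
    (m : ℕ)
    (hm : max ((8 * (Nat.floor (2 * k * logb 2 (n * Real.exp 1)) : ℝ) / ε) * logb 2 (8 * Real.exp 1 / ε))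
              ((4 / ε) * logb 2 (2 / δ)) ≤ (m : ℝ)) :
    (Measure.pi fun _ : Fin m => P)
      {a : Fin m → Fin n → ℝ | ∃ xh : Fin n → ℝ, sparse n k xh ∧
        (∀ i : Fin m, (0 ≤ ∑ j, a i j * xh j) ↔ (0 ≤ ∑ j, a i j * x j)) ∧
        ε < (P {v : Fin n → ℝ | ¬ ((0 ≤ ∑ j, v j * xh j) ↔ (0 ≤ ∑ j, v j * x j))}).toReal}
      ≤ ENNReal.ofReal δ :=
  consistent_obcs_pac_general n k hn hk1 hkn P {v | 0 ≤ ∑ j, v j * x j}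
    (measurableSet_le measurable_const (by fun_prop)) ε δ ⟨hε.1, hε.2.le⟩ hδ.1 m hm
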